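/- Let n be a positive integer and let M be a real 2n×2n matrix in the split orthogonal group O(n,n). Then det(M) · det(M₁₁) · det(M₂₂) > 0; that is, det(M) = +1 on the components O⁺⁺(n,n) and O⁻⁻(n,n), and det(M) = −1 on the two mixed components. -/

import Mathlib

open Matrix

/-- The metric `η = diag(I_n, -I_n)` as a `2n × 2n` real matrix. -/
noncomputable def splitMetric (n : ℕ) : Matrix (Fin n ⊕ Fin n) (Fin n ⊕ Fin n) ℝ :=
  Matrix.fromBlocks 1 0 0 (-1)

/-!
For `M` in the orthogonal group of `η = diag(1, -1)`, the inverse `η Mᵀ η` has upper-left block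
`M₁₁ᵀ`, so Jacobi's complementary minor identity reads `det M₁₁ * det M = det M₂₂`. The product of
the three determinants is therefore `(det M₂₂) ^ 2`, and `M₂₂` is nonsingular because
`M₂₂ᵀ M₂₂ = 1 + M₁₂ᵀ M₁₂` is positive definite.
-/

open LieAlgebra.Orthogonal (indefiniteDiagonal)

section CommRing

variable {m n R : Type*} [DecidableEq m] [DecidableEq n] [CommRing R]

theorem indefiniteDiagonal_eq_fromBlocks :
    indefiniteDiagonal m n R = fromBlocks 1 0 0 (-1) := by
  rw [indefiniteDiagonal, ← diagonal_one, ← diagonal_one, diagonal_neg, fromBlocks_diagonal]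

variable [Fintype m] [Fintype n]

theorem indefiniteDiagonal_mul_self :
    indefiniteDiagonal m n R * indefiniteDiagonal m n R = 1 := by
  simp [indefiniteDiagonal_eq_fromBlocks, fromBlocks_multiply]

theorem det_toBlocks₁₁_mul_det_of_mul_eq_one {N M : Matrix (m ⊕ n) (m ⊕ n) R} (h : N * M = 1) :
    N.toBlocks₁₁.det * M.det = M.toBlocks₂₂.det := by
  obtain ⟨A, B, C, D, rfl⟩ : ∃ A B C D, M = fromBlocks A B C D :=
    ⟨_, _, _, _, (fromBlocks_toBlocks M).symm⟩
  obtain ⟨P, Q, S, T, rfl⟩ : ∃ P Q S T, N = fromBlocks P Q S T :=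
    ⟨_, _, _, _, (fromBlocks_toBlocks N).symm⟩
  rw [fromBlocks_multiply, ← fromBlocks_one, fromBlocks_inj] at h
  obtain ⟨h₁₁, h₁₂, -, -⟩ := h
  have hmul : fromBlocks P Q 0 1 * fromBlocks A B C D = fromBlocks 1 0 C D := by
    simp [fromBlocks_multiply, h₁₁, h₁₂]
  simpa using congrArg det hmul

variable {M : Matrix (m ⊕ n) (m ⊕ n) R}

theorem det_toBlocks₁₁_mul_det_of_transpose_mul_indefiniteDiagonal_mul
    (hM : Mᵀ * indefiniteDiagonal m n R * M = indefiniteDiagonal m n R) :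
    M.toBlocks₁₁.det * M.det = M.toBlocks₂₂.det := by
  have hinv : indefiniteDiagonal m n R * Mᵀ * indefiniteDiagonal m n R * M = 1 := by
    rw [mul_assoc, mul_assoc, ← mul_assoc Mᵀ, hM, indefiniteDiagonal_mul_self]
  have hblock : (indefiniteDiagonal m n R * Mᵀ * indefiniteDiagonal m n R).toBlocks₁₁ =
      M.toBlocks₁₁ᵀ := by
    rw [indefiniteDiagonal_eq_fromBlocks, ← fromBlocks_toBlocks M]
    simp [fromBlocks_transpose, fromBlocks_multiply]
  rw [← det_toBlocks₁₁_mul_det_of_mul_eq_one hinv, hblock, det_transpose]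

theorem toBlocks₂₂_transpose_mul_self_of_transpose_mul_indefiniteDiagonal_mul
    (hM : Mᵀ * indefiniteDiagonal m n R * M = indefiniteDiagonal m n R) :
    M.toBlocks₂₂ᵀ * M.toBlocks₂₂ = 1 + M.toBlocks₁₂ᵀ * M.toBlocks₁₂ := by
  rw [indefiniteDiagonal_eq_fromBlocks, ← fromBlocks_toBlocks M] at hM
  simp only [fromBlocks_transpose, fromBlocks_multiply, fromBlocks_inj,
    Matrix.mul_one, Matrix.mul_zero, add_zero, zero_add, Matrix.mul_neg, Matrix.neg_mul] at hM
  obtain ⟨-, -, -, h₂₂⟩ := hM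
  rw [add_neg_eq_iff_eq_add.mp h₂₂, add_neg_cancel_left]

end CommRing

section LinearOrderedCommRing

variable {m n R : Type*} [Fintype m] [Fintype n] [DecidableEq n]
  [CommRing R] [LinearOrder R] [IsStrictOrderedRing R]

theorem det_ne_zero_of_transpose_mul_self_eq_one_add {B : Matrix m n R} {D : Matrix n n R}
    (h : Dᵀ * D = 1 + Bᵀ * B) : D.det ≠ 0 := by
  intro hdet
  obtain ⟨v, hv, hDv⟩ := exists_mulVec_eq_zero_iff.mpr hdet
  have hnull : Sum.elim v (B *ᵥ v) ⬝ᵥ Sum.elim v (B *ᵥ v) = 0 :=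
    calc Sum.elim v (B *ᵥ v) ⬝ᵥ Sum.elim v (B *ᵥ v)
      _ = v ⬝ᵥ (1 + Bᵀ * B) *ᵥ v := by
        rw [sumElim_dotProduct_sumElim, add_mulVec, one_mulVec, dotProduct_add, ← mulVec_mulVec,
          dotProduct_transpose_mulVec]
      _ = 0 := by rw [← h, ← mulVec_mulVec, hDv, mulVec_zero, dotProduct_zero]
  exact hv (funext fun i ↦ congrFun (dotProduct_self_eq_zero.mp hnull) (Sum.inl i))

theorem det_mul_det_blocks_pos_general [DecidableEq m] {M : Matrix (m ⊕ n) (m ⊕ n) R}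
    (hM : Mᵀ * indefiniteDiagonal m n R * M = indefiniteDiagonal m n R) :
    0 < M.det * M.toBlocks₁₁.det * M.toBlocks₂₂.det := by
  have hD : M.toBlocks₂₂.det ≠ 0 := det_ne_zero_of_transpose_mul_self_eq_one_add
    (toBlocks₂₂_transpose_mul_self_of_transpose_mul_indefiniteDiagonal_mul hM)
  rw [mul_comm M.det, det_toBlocks₁₁_mul_det_of_transpose_mul_indefiniteDiagonal_mul hM]
  exact mul_self_pos.mpr hD

end LinearOrderedCommRing

theorem det_mul_det_blocks_pos (n : ℕ) (hn : 0 < n)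
    (M : Matrix (Fin n ⊕ Fin n) (Fin n ⊕ Fin n) ℝ)
    (hM : Mᵀ * splitMetric n * M = splitMetric n) :
    0 < M.det * M.toBlocks₁₁.det * M.toBlocks₂₂.det := by
  rw [splitMetric, ← indefiniteDiagonal_eq_fromBlocks] at hM
  exact det_mul_det_blocks_pos_general hM
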